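/- Let p, q, r be positive real numbers with 1/p = 1/q + 1/r, let a < b be real numbers, and let m, n be positive integers. Then D**(m+n,p,[a,b]) ≤ D**(m,q,[a,b]) · D**(n,r,[a,b]). Consequently, C(m+n,p)/(m+n)! ≥ (C(m,q)/m!) · (C(n,r)/n!). -/

import Mathlib

open Set Polynomial Nat MeasureTheory ENNReal

/-- `fd 0` belongs to `𝒟ⁿ([a,b])`, with `fd k` its `k`-th derivative: `fd k` exists and is
continuous on `[a,b]` for `0 ≤ k ≤ n-1`, and `fd n` is the derivative of `fd (n-1)` on `(a,b)`. -/
def IsDn (n : ℕ) (a b : ℝ) (fd : ℕ → ℝ → ℝ) : Prop :=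
  (∀ k, k + 1 < n → ∀ x ∈ Set.Icc a b, HasDerivWithinAt (fd k) (fd (k + 1) x) (Set.Icc a b) x) ∧
  ContinuousOn (fd (n - 1)) (Set.Icc a b) ∧
  (∀ x ∈ Set.Ioo a b, HasDerivAt (fd (n - 1)) (fd n x) x)

/-- `m_n(f) = inf_{a<t<b} |f^{(n)}(t)|`. -/
noncomputable def mIoo (n : ℕ) (a b : ℝ) (fd : ℕ → ℝ → ℝ) : ℝ :=
  sInf ((fun t => |fd n t|) '' Set.Ioo a b)

/-- `‖f‖_{p,[a,b]}` for `0 < p < ∞`. -/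
noncomputable def Lp (p a b : ℝ) (f : ℝ → ℝ) : ℝ :=
  (∫ t in a..b, |f t| ^ p) ^ (1 / p)

/-- `‖f‖_{∞,[a,b]}`. -/
noncomputable def Lsup (a b : ℝ) (f : ℝ → ℝ) : ℝ :=
  sSup ((fun t => |f t|) '' Set.Icc a b)

/-- `‖f‖_{p,[a,b]}` for `0 < p ≤ ∞`. -/
noncomputable def pnorm (p : ℝ≥0∞) (a b : ℝ) (f : ℝ → ℝ) : ℝ :=
  if p = ⊤ then Lsup a b f else Lp p.toReal a b f

/-- `D**(n,p,[a,b])`, `p` finite. -/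
noncomputable def Dstar (n : ℕ) (p a b : ℝ) : ℝ :=
  sInf { c | ∃ Q : Polynomial ℝ, Q.Monic ∧ Q.natDegree = n ∧ c = Lp p a b (fun x => Q.eval x) }

/-- `D**(n,∞,[a,b])`. -/
noncomputable def DstarInf (n : ℕ) (a b : ℝ) : ℝ :=
  sInf { c | ∃ Q : Polynomial ℝ, Q.Monic ∧ Q.natDegree = n ∧ c = Lsup a b (fun x => Q.eval x) }

/-- `C(n,p)`, `p` finite. -/
noncomputable def Cnp (n : ℕ) (p : ℝ) : ℝ :=
  sSup { c | ∃ fd : ℕ → ℝ → ℝ, IsDn n 0 1 fd ∧ (∃ x ∈ Set.Icc (0:ℝ) 1, fd 0 x ≠ 0) ∧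
    c = mIoo n 0 1 fd / Lp p 0 1 (fd 0) }

/-- `C(n,∞)`. -/
noncomputable def CnpInf (n : ℕ) : ℝ :=
  sSup { c | ∃ fd : ℕ → ℝ → ℝ, IsDn n 0 1 fd ∧ (∃ x ∈ Set.Icc (0:ℝ) 1, fd 0 x ≠ 0) ∧
    c = mIoo n 0 1 fd / Lsup 0 1 (fd 0) }


lemma rolle_iter (a b : ℝ) (n : ℕ) : ∀ (g : ℕ → ℝ → ℝ), IsDn (n + 1) a b g → ∀ t : ℕ → ℝ,
    (∀ i ≤ n + 1, t i ∈ Set.Icc a b ∧ g 0 (t i) = 0) → (∀ i < n + 1, t i < t (i + 1)) →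
    ∃ ξ ∈ Set.Ioo a b, g (n + 1) ξ = 0 := by
  induction n with
  | zero =>
    intro g hg t ht hlt
    obtain ⟨-, hc, hd⟩ := hg
    have h0 := ht 0 (by omega)
    have h1 := ht 1 (by omega)
    simp only [zero_add, Nat.sub_self] at hc hd
    obtain ⟨c, hc1, hc2⟩ := exists_hasDerivAt_eq_zero (hlt 0 (by omega))
      (hc.mono (Set.Icc_subset_Icc h0.1.1 h1.1.2)) (h0.2.trans h1.2.symm)
      (fun x hx => hd x ⟨h0.1.1.trans_lt hx.1, hx.2.trans_le h1.1.2⟩)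
    exact ⟨c, ⟨h0.1.1.trans_lt hc1.1, hc1.2.trans_le h1.1.2⟩, hc2⟩
  | succ n ih =>
    intro g hg t ht hlt
    obtain ⟨h1, hc, hd⟩ := hg
    have hs : ∀ i, ∃ s, i < n + 2 → s ∈ Set.Ioo (t i) (t (i+1)) ∧ g 1 s = 0 := by
      intro i
      by_cases hi : i < n + 2
      · have e0 := ht i (by omega)
        have e1 := ht (i+1) (by omega)
        have hcont : ContinuousOn (g 0) (Set.Icc a b) := fun x hx =>
          (h1 0 (by omega) x hx).continuousWithinAt
        obtain ⟨c, hc1, hc2⟩ := exists_hasDerivAt_eq_zero (hlt i hi)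
          (hcont.mono (Set.Icc_subset_Icc e0.1.1 e1.1.2)) (e0.2.trans e1.2.symm) (f' := g 1)
          (fun x hx => by
            have hx1 : a < x := e0.1.1.trans_lt hx.1
            have hx2 : x < b := hx.2.trans_le e1.1.2
            exact (h1 0 (by omega) x ⟨hx1.le, hx2.le⟩).hasDerivAt (Icc_mem_nhds hx1 hx2))
        exact ⟨c, fun _ => ⟨hc1, hc2⟩⟩
      · exact ⟨0, fun h => absurd h hi⟩
    choose s hs using hs
    refine ih (fun k => g (k + 1)) ⟨fun k hk => h1 (k+1) (by omega), ?_, ?_⟩ s ?_ ?_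
    · simpa using hc
    · simpa using hd
    · intro i hi
      have := hs i (by omega)
      have e0 := ht i (by omega)
      have e1 := ht (i+1) (by omega)
      exact ⟨⟨e0.1.1.trans this.1.1.le, this.1.2.le.trans e1.1.2⟩, this.2⟩
    · intro i hi
      exact (hs i (by omega)).1.2.trans (hs (i+1) (by omega)).1.1

lemma iterD_const (n : ℕ) (P : Polynomial ℝ) (hP : P.natDegree ≤ n) (x : ℝ) :
    (derivative^[n] P).eval x = n ! * P.coeff n := by
  have h : (derivative^[n] P).natDegree = 0 := by
    have := natDegree_iterate_derivative P n
    omega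
  rw [eq_C_of_natDegree_eq_zero h, eval_C, coeff_iterate_derivative]
  simp [Nat.descFactorial_self]

lemma isDn_sub_poly (n : ℕ) (a b : ℝ) (fd : ℕ → ℝ → ℝ) (h : IsDn n a b fd) (P : Polynomial ℝ)
    (hn : 1 ≤ n) :
    IsDn n a b (fun k x => fd k x - (derivative^[k] P).eval x) := by
  obtain ⟨h1, h2, h3⟩ := h
  have hd : ∀ k x, HasDerivAt (fun x => (derivative^[k] P).eval x)
      ((derivative^[k+1] P).eval x) x := by
    intro k x
    rw [Function.iterate_succ_apply']
    exact Polynomial.hasDerivAt _ x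
  refine ⟨fun k hk x hx => (h1 k hk x hx).sub (hd k x).hasDerivWithinAt,
    h2.sub (Polynomial.continuous _).continuousOn, fun x hx => ?_⟩
  have := (h3 x hx).sub (hd (n-1) x)
  rw [Nat.sub_add_cancel hn] at this
  exact this

lemma interp (n : ℕ) (hn : 1 ≤ n) (a b : ℝ) (fd : ℕ → ℝ → ℝ) (h : IsDn n a b fd) (m : ℝ)
    (hm : 0 < m) (hfm : ∀ t ∈ Set.Ioo a b, m ≤ |fd n t|) (I : Finset ℝ)
    (hI : ∀ x ∈ I, x ∈ Set.Icc a b) (hcard : I.card = n + 1) :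
    ∃ Q : Polynomial ℝ, Q.Monic ∧ Q.natDegree = n ∧
      ∀ x ∈ I, |Q.eval x| ≤ n ! / m * |fd 0 x| := by
  set P := Lagrange.interpolate I id (fd 0) with hP
  have hinj : Set.InjOn (id : ℝ → ℝ) (I : Set ℝ) := Function.injective_id.injOn
  have hdeg : P.natDegree ≤ n := by
    have := Lagrange.degree_interpolate_le (s := I) (v := id) (fd 0) hinj
    rw [hcard] at this
    exact natDegree_le_of_degree_le this
  have hev : ∀ x ∈ I, P.eval x = fd 0 x := fun x hx =>
    Lagrange.eval_interpolate_at_node (v := id) (fd 0) hinj hx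
  obtain ⟨N, rfl⟩ : ∃ N, n = N + 1 := ⟨n - 1, by omega⟩
  have key : ∃ ξ ∈ Set.Ioo a b, fd (N+1) ξ - (derivative^[N+1] P).eval ξ = 0 := by
    refine rolle_iter a b N _ (isDn_sub_poly _ a b fd h P hn)
      (fun i => if hi : i < N + 1 + 1 then I.orderEmbOfFin hcard ⟨i, hi⟩ else 0) ?_ ?_
    · intro i hi
      have hi' : i < N + 1 + 1 := by omega
      have hmem := I.orderEmbOfFin_mem hcard ⟨i, hi'⟩
      simp only [hi', dif_pos, Function.iterate_zero, id]
      exact ⟨hI _ hmem, by rw [hev _ hmem, sub_self]⟩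
    · intro i hi
      have hi' : i < N + 1 + 1 := by omega
      have hi'' : i + 1 < N + 1 + 1 := by omega
      simp only [hi', hi'', dif_pos]
      exact (I.orderEmbOfFin hcard).strictMono (by simp [Fin.lt_def])
  obtain ⟨ξ, hξ, he⟩ := key
  rw [iterD_const _ _ hdeg] at he
  have hfx := hfm ξ hξ
  set c := P.coeff (N+1) with hc
  have hF : (0:ℝ) < ((N+1)! : ℝ) := by exact_mod_cast Nat.factorial_pos _
  rw [sub_eq_zero.mp he, abs_mul, abs_of_pos hF] at hfx
  have hcpos : 0 < |c| := by
    rcases (abs_nonneg c).lt_or_eq with h | h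
    · exact h
    · rw [← h] at hfx; linarith
  have hc0 : c ≠ 0 := abs_pos.mp hcpos
  have hnd : P.natDegree = N + 1 := le_antisymm hdeg (le_natDegree_of_ne_zero hc0)
  refine ⟨C c⁻¹ * P, ?_, ?_, ?_⟩
  · rw [Monic, leadingCoeff_mul, leadingCoeff_C, leadingCoeff, hnd, ← hc, inv_mul_cancel₀ hc0]
  · rw [natDegree_C_mul (inv_ne_zero hc0), hnd]
  · intro x hx
    rw [eval_mul, eval_C, hev x hx, abs_mul, abs_inv]
    refine mul_le_mul_of_nonneg_right ?_ (abs_nonneg _)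
    rw [inv_le_comm₀ hcpos (by positivity), inv_div, div_le_iff₀ hF]
    linarith

lemma exists_poly (n : ℕ) (a b : ℝ) (hab : a < b) (w : ℝ → ℝ)
    (H : ∀ I : Finset ℝ, (∀ x ∈ I, x ∈ Set.Icc a b) → I.card = n + 1 →
      ∃ Q : Polynomial ℝ, Q.Monic ∧ Q.natDegree = n ∧ ∀ x ∈ I, |Q.eval x| ≤ w x) :
    ∃ Q : Polynomial ℝ, Q.Monic ∧ Q.natDegree = n ∧ ∀ x ∈ Set.Icc a b, |Q.eval x| ≤ w x := by
  classical
  obtain ⟨Z, hZ, hZc⟩ := (Set.Icc_infinite hab).exists_subset_card_eq n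
  obtain ⟨Z', hZ', hZc'⟩ := (Set.Icc_infinite hab).exists_subset_card_eq (n + 1)
  let v : Fin n → ℝ := fun i => Z.orderEmbOfFin hZc i
  have hv : Set.InjOn v ((Finset.univ : Finset (Fin n)) : Set (Fin n)) :=
    (Z.orderEmbOfFin hZc).injective.injOn
  have hvm : ∀ i, v i ∈ Set.Icc a b := fun i => hZ (Z.orderEmbOfFin_mem hZc i)
  let N : Polynomial ℝ := Lagrange.nodal Finset.univ v
  let L : (Fin n → ℝ) →ₗ[ℝ] Polynomial ℝ := Lagrange.interpolate Finset.univ v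
  have hNd : N.degree = n := by simp [N]
  have hNm : N.Monic := Lagrange.nodal_monic
  have hLd : ∀ u, (L u).degree < N.degree := fun u => by
    have := Lagrange.degree_interpolate_lt (s := Finset.univ) u hv
    rw [hNd]; simpa only [Finset.card_univ, Fintype.card_fin] using this
  have hsurj : ∀ Q : Polynomial ℝ, Q.Monic → Q.natDegree = n → ∃ u, Q = N + L u := by
    intro Q hQ hQn
    have hQd : Q.degree = n := by rw [degree_eq_natDegree hQ.ne_zero, hQn]
    have : (Q - N).degree < (Finset.univ : Finset (Fin n)).card := by
      have := degree_sub_lt_left (p := Q) (q := N) (by rw [hQd, hNd]) hQ.ne_zero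
        (by rw [hQ.leadingCoeff, hNm.leadingCoeff])
      rw [hQd] at this
      simpa using this
    have e := Lagrange.eq_interpolate hv this
    exact ⟨_, by rw [show L _ = _ from e.symm]; ring⟩
  let S : ℝ → Set (Fin n → ℝ) := fun x => {u | |N.eval x + (L u).eval x| ≤ w x}
  let ℓ : ℝ → ((Fin n → ℝ) →ₗ[ℝ] ℝ) := fun x => (Polynomial.leval x).comp L
  have hSℓ : ∀ x, S x = {u | |N.eval x + ℓ x u| ≤ w x} := fun x => rfl
  have hconv : ∀ x, Convex ℝ (S x) := by
    intro x
    rw [hSℓ]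
    intro u hu u' hu' α β hα hβ hαβ
    simp only [Set.mem_ofPred_eq, map_add, map_smul, smul_eq_mul] at *
    rw [abs_le] at *
    have e : N.eval x + (α * ℓ x u + β * ℓ x u') =
      α * (N.eval x + ℓ x u) + β * (N.eval x + ℓ x u') := by
      linear_combination (- N.eval x) * hαβ
    rw [e]
    have e2 : w x = α * w x + β * w x := by rw [← add_mul, hαβ, one_mul]
    have i1 := mul_le_mul_of_nonneg_left hu.1 hα
    have i2 := mul_le_mul_of_nonneg_left hu.2 hα
    have i3 := mul_le_mul_of_nonneg_left hu'.1 hβ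
    have i4 := mul_le_mul_of_nonneg_left hu'.2 hβ
    constructor <;> linarith
  have hclosed : ∀ x, IsClosed (S x) := by
    intro x
    rw [hSℓ]
    have : Continuous (ℓ x) := LinearMap.continuous_of_finiteDimensional _
    exact isClosed_le (by fun_prop) continuous_const
  have hfin : ∀ s : Finset ℝ, (∀ x ∈ s, x ∈ Set.Icc a b) → (⋂ x ∈ s ∪ Z', S x).Nonempty := by
    intro s hs
    refine Convex.helly_theorem (𝕜 := ℝ) ?_ (fun x _ => hconv x) ?_
    · simp only [Module.finrank_fin_fun]
      rw [← hZc']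
      exact Finset.card_le_card Finset.subset_union_right
    · intro I hI hIc
      simp only [Module.finrank_fin_fun] at hIc
      obtain ⟨Q, hQ, hQn, hQI⟩ := H I (fun x hx => by
        rcases Finset.mem_union.mp (hI hx) with h | h
        · exact hs x h
        · exact hZ' h) hIc
      obtain ⟨u, rfl⟩ := hsurj Q hQ hQn
      exact ⟨u, by simpa [S] using hQI⟩
  let K : Set (Fin n → ℝ) := Set.univ.pi fun i => Set.Icc (- w (v i)) (w (v i))
  have hK : IsCompact K := isCompact_univ_pi fun i => isCompact_Icc
  have hfip := hK.inter_iInter_nonempty (fun x : Set.Icc a b => S x) (fun x => hclosed x) (by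
    intro t
    obtain ⟨u, hu⟩ := hfin (t.image Subtype.val ∪ Finset.univ.image v) (by
      intro x hx
      simp only [Finset.mem_union, Finset.mem_image, Finset.mem_univ, true_and] at hx
      rcases hx with ⟨y, -, rfl⟩ | ⟨i, rfl⟩
      · exact y.2
      · exact hvm i)
    simp only [Set.mem_iInter] at hu
    refine ⟨u, ?_, ?_⟩
    · intro i _
      have := hu (v i) (by simp)
      simp only [S, Set.mem_ofPred_eq] at this
      have e1 : N.eval (v i) = 0 := Lagrange.eval_nodal_at_node (Finset.mem_univ i)
      have e2 : (L u).eval (v i) = u i := Lagrange.eval_interpolate_at_node u hv (Finset.mem_univ i)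
      rw [e1, e2, zero_add, abs_le] at this
      exact this
    · simp only [Set.mem_iInter]
      intro x hx
      refine hu x ?_
      simp only [Finset.mem_union, Finset.mem_image]
      exact Or.inl (Or.inl ⟨x, hx, rfl⟩))
  obtain ⟨u, -, hu⟩ := hfip
  simp only [Set.mem_iInter] at hu
  refine ⟨N + L u, hNm.add_of_left (hLd u), ?_, ?_⟩
  · exact natDegree_eq_of_degree_eq_some ((degree_add_eq_left_of_degree_lt (hLd u)).trans hNd)
  · intro x hx
    simpa [S] using hu ⟨x, hx⟩

lemma lower_pt (n : ℕ) (h : ℝ) (hh : 0 < h) (y : ℝ) (Q : Polynomial ℝ) (hQ : Q.Monic)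
    (hQn : Q.natDegree = n) :
    ∃ k ∈ Finset.range (n + 1), h ^ n / (n + 1) ≤ |Q.eval (y + k * h)| := by
  by_contra hcon
  push Not at hcon
  let v : ℕ → ℝ := fun k => y + k * h
  have hv : Set.InjOn v (Finset.range (n+1) : Set ℕ) := by
    intro i _ j _ hij
    have : (i : ℝ) * h = j * h := by simpa [v] using hij
    exact_mod_cast mul_right_cancel₀ hh.ne' this
  have hd : Q.degree < (Finset.range (n+1)).card := by
    rw [degree_eq_natDegree hQ.ne_zero, hQn, Finset.card_range]
    exact_mod_cast Nat.lt_succ_self n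
  have e := Lagrange.coeff_eq_sum hv hd
  rw [Finset.card_range, Nat.add_sub_cancel] at e
  have e1 : Q.coeff n = 1 := by rw [← hQn]; exact hQ.coeff_natDegree
  rw [e1] at e
  have hb : ∀ i ∈ Finset.range (n+1),
      |Q.eval (v i) / ∏ j ∈ (Finset.range (n+1)).erase i, (v i - v j)| < 1 / (n + 1) := by
    intro i hi
    have hprod : h ^ n ≤ |∏ j ∈ (Finset.range (n+1)).erase i, (v i - v j)| := by
      rw [Finset.abs_prod]
      have : h ^ n = ∏ j ∈ (Finset.range (n+1)).erase i, h := by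
        rw [Finset.prod_const, Finset.card_erase_of_mem hi, Finset.card_range, Nat.add_sub_cancel]
      rw [this]
      refine Finset.prod_le_prod (fun _ _ => hh.le) (fun j hj => ?_)
      have hne : (i : ℤ) - j ≠ 0 := by
        have := (Finset.mem_erase.mp hj).1
        omega
      have h1 : (1 : ℝ) ≤ |(i : ℝ) - j| := by
        have := Int.one_le_abs hne
        exact_mod_cast this
      have : v i - v j = ((i : ℝ) - j) * h := by simp only [v]; ring
      rw [this, abs_mul, abs_of_pos hh]
      nlinarith
    have hpos : 0 < h ^ n := by positivity
    rw [abs_div, div_lt_iff₀ (hpos.trans_le hprod)]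
    calc _ < h ^ n / (n + 1) := hcon i hi
      _ = 1 / (n+1) * h ^ n := by ring
      _ ≤ _ := by gcongr
  have : (1 : ℝ) < 1 := by
    calc (1 : ℝ) = |∑ i ∈ Finset.range (n+1),
          Q.eval (v i) / ∏ j ∈ (Finset.range (n+1)).erase i, (v i - v j)| := by rw [← e, abs_one]
      _ ≤ _ := Finset.abs_sum_le_sum_abs _ _
      _ < ∑ i ∈ Finset.range (n+1), (1 / (n + 1) : ℝ) :=
          Finset.sum_lt_sum_of_nonempty (by simp) hb
      _ = 1 := by
          rw [Finset.sum_const, Finset.card_range, nsmul_eq_mul]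
          push_cast
          field_simp
  exact lt_irrefl _ this

lemma cont_abs_rpow (p : ℝ) (hp : 0 < p) (Q : Polynomial ℝ) :
    Continuous (fun x => |Q.eval x| ^ p) :=
  (Q.continuous.abs).rpow_const (fun _ => Or.inr hp.le)

lemma lower_Lp (n : ℕ) (p : ℝ) (hp : 0 < p) (a b : ℝ) (hab : a < b) :
    ∃ δ > 0, ∀ Q : Polynomial ℝ, Q.Monic → Q.natDegree = n →
      δ ≤ _root_.Lp p a b (fun x => Q.eval x) := by
  let h : ℝ := (b - a) / (n + 1)
  have hn1 : (0:ℝ) < n + 1 := by positivity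
  have hh : 0 < h := div_pos (sub_pos.mpr hab) hn1
  let d : ℝ := h ^ n / (n + 1)
  have hd : 0 < d := by positivity
  refine ⟨(h * d ^ p) ^ (1 / p), by positivity, fun Q hQ hQn => ?_⟩
  unfold _root_.Lp
  refine Real.rpow_le_rpow (by positivity) ?_ (by positivity)
  have hc := cont_abs_rpow p hp Q
  have e := intervalIntegral.sum_integral_adjacent_intervals (f := fun x => |Q.eval x| ^ p)
    (μ := volume) (a := fun k : ℕ => a + k * h) (n := n + 1)
    (fun k _ => hc.intervalIntegrable _ _)
  have eb : a + ((n + 1 : ℕ) : ℝ) * h = b := by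
    simp only [h]; push_cast; field_simp; ring
  rw [eb] at e
  simp only [Nat.cast_zero, zero_mul, add_zero] at e
  rw [← e]
  have e2 : ∀ k : ℕ, ∫ x in (a + k * h)..(a + ((k + 1 : ℕ) : ℝ) * h), |Q.eval x| ^ p =
      ∫ x in (0:ℝ)..h, |Q.eval (x + (a + k * h))| ^ p := by
    intro k
    rw [intervalIntegral.integral_comp_add_right (fun x => |Q.eval x| ^ p)]
    congr 1
    · ring
    · push_cast; ring
  simp_rw [e2]
  have hck : ∀ k : ℕ, Continuous fun x => |Q.eval (x + (a + k * h))| ^ p := fun k =>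
    hc.comp (by fun_prop)
  rw [← intervalIntegral.integral_finsetSum (fun k _ => (hck k).intervalIntegrable _ _)]
  have e3 : h * d ^ p = ∫ x in (0:ℝ)..h, d ^ p := by simp
  rw [e3]
  refine intervalIntegral.integral_mono_on hh.le (by simp)
    ((continuous_finsetSum _ fun k _ => hck k).intervalIntegrable _ _) (fun x _ => ?_)
  obtain ⟨k, hk, hkd⟩ := lower_pt n h hh (x + a) Q hQ hQn
  calc d ^ p ≤ |Q.eval (x + (a + k * h))| ^ p := by
        refine Real.rpow_le_rpow hd.le ?_ hp.le
        rw [← add_assoc]; exact hkd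
    _ ≤ _ := Finset.single_le_sum (f := fun k : ℕ => |Q.eval (x + (a + k * h))| ^ p)
        (fun _ _ => by positivity) hk

lemma memLp_cont (a b : ℝ) (f : ℝ → ℝ) (hf : Continuous f) (s : ℝ≥0∞) :
    MemLp f s (volume.restrict (Set.Ioc a b)) := by
  obtain ⟨M, hM⟩ := (isCompact_Icc (a := a) (b := b)).exists_bound_of_continuousOn hf.continuousOn
  refine MemLp.of_bound hf.aestronglyMeasurable M ?_
  filter_upwards [ae_restrict_mem measurableSet_Ioc] with x hx
  exact hM x (Set.Ioc_subset_Icc_self hx)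

lemma holder (p q r : ℝ) (hp : 0 < p) (hq : 0 < q) (hr : 0 < r)
    (hpqr : 1 / p = 1 / q + 1 / r) (a b : ℝ) (hab : a < b) (F G : Polynomial ℝ) :
    _root_.Lp p a b (fun x => (F * G).eval x) ≤
      _root_.Lp q a b (fun x => F.eval x) * _root_.Lp r a b (fun x => G.eval x) := by
  have hconj : (q / p).HolderConjugate (r / p) := by
    rw [Real.holderConjugate_iff]
    have hsum : (q / p)⁻¹ + (r / p)⁻¹ = 1 := by
      rw [inv_div, inv_div]
      have : p * (1 / p) = p * (1 / q + 1 / r) := by rw [hpqr]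
      rw [mul_one_div_cancel hp.ne'] at this
      rw [this]; ring
    refine ⟨?_, hsum⟩
    have h2 : 0 < (r / p)⁻¹ := by positivity
    exact (inv_lt_one₀ (by positivity)).mp (by linarith)
  have key := integral_mul_le_Lp_mul_Lq_of_nonneg (μ := volume.restrict (Set.Ioc a b)) hconj
    (f := fun x => |F.eval x| ^ p) (g := fun x => |G.eval x| ^ p)
    (Filter.Eventually.of_forall fun x => by positivity)
    (Filter.Eventually.of_forall fun x => by positivity)
    (memLp_cont a b _ (cont_abs_rpow p hp F) _) (memLp_cont a b _ (cont_abs_rpow p hp G) _)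
  have eF : ∀ (s : ℝ) (P : Polynomial ℝ) (x : ℝ), (|P.eval x| ^ p) ^ (s / p) = |P.eval x| ^ s := by
    intro s P x
    rw [← Real.rpow_mul (abs_nonneg _), mul_div_cancel₀ _ hp.ne']
  simp only [eF] at key
  unfold _root_.Lp
  simp only [intervalIntegral.integral_of_le hab.le, eval_mul, abs_mul]
  simp_rw [Real.mul_rpow (abs_nonneg _) (abs_nonneg _)]
  have hA : 0 ≤ ∫ x in Set.Ioc a b, |F.eval x| ^ q := integral_nonneg fun x => by positivity
  have hB : 0 ≤ ∫ x in Set.Ioc a b, |G.eval x| ^ r := integral_nonneg fun x => by positivity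
  have hL : 0 ≤ ∫ x in Set.Ioc a b, |F.eval x| ^ p * |G.eval x| ^ p :=
    integral_nonneg fun x => by positivity
  have := Real.rpow_le_rpow hL key (z := 1 / p) (by positivity)
  rw [Real.mul_rpow (by positivity) (by positivity), ← Real.rpow_mul hA, ← Real.rpow_mul hB] at this
  convert this using 3 <;> field_simp

lemma Lp_nonneg' (p a b : ℝ) (hab : a ≤ b) (f : ℝ → ℝ) : 0 ≤ _root_.Lp p a b f :=
  Real.rpow_nonneg (intervalIntegral.integral_nonneg hab fun x _ => by positivity) _

lemma Dstar_le (n : ℕ) (p a b : ℝ) (hab : a ≤ b) (Q : Polynomial ℝ) (hQ : Q.Monic)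
    (hQn : Q.natDegree = n) : Dstar n p a b ≤ _root_.Lp p a b (fun x => Q.eval x) :=
  csInf_le ⟨0, by rintro c ⟨Q, -, -, rfl⟩; exact Lp_nonneg' _ _ _ hab _⟩ ⟨Q, hQ, hQn, rfl⟩

lemma le_Dstar (n : ℕ) (p a b : ℝ) (c : ℝ) (h : ∀ Q : Polynomial ℝ, Q.Monic → Q.natDegree = n →
    c ≤ _root_.Lp p a b (fun x => Q.eval x)) : c ≤ Dstar n p a b :=
  le_csInf ⟨_, X ^ n, monic_X_pow n, natDegree_X_pow n, rfl⟩
    (by rintro _ ⟨Q, hQ, hQn, rfl⟩; exact h Q hQ hQn)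

lemma Dstar_pos (n : ℕ) (p : ℝ) (hp : 0 < p) (a b : ℝ) (hab : a < b) : 0 < Dstar n p a b := by
  obtain ⟨δ, hδ, h⟩ := lower_Lp n p hp a b hab
  exact hδ.trans_le (le_Dstar n p a b δ h)

lemma Dstar_mul (p q r : ℝ) (hp : 0 < p) (hq : 0 < q) (hr : 0 < r)
    (hpqr : 1 / p = 1 / q + 1 / r) (a b : ℝ) (hab : a < b) (m n : ℕ) :
    Dstar (m + n) p a b ≤ Dstar m q a b * Dstar n r a b := by
  have hD := Dstar_pos n r hr a b hab
  rw [← div_le_iff₀ hD]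
  refine le_Dstar _ _ _ _ _ fun F hF hFm => ?_
  have hpF := (Dstar_pos m q hq a b hab).trans_le (Dstar_le m q a b hab.le F hF hFm)
  rw [div_le_comm₀ hD hpF]
  refine le_Dstar _ _ _ _ _ fun G hG hGn => ?_
  rw [div_le_iff₀ hpF, mul_comm]
  exact (Dstar_le (m + n) p a b hab.le (F * G) (hF.mul hG)
    (by rw [hF.natDegree_mul hG, hFm, hGn])).trans (holder p q r hp hq hr hpqr a b hab F G)

lemma Lp_mono_scale (p : ℝ) (hp : 0 < p) (a b : ℝ) (hab : a < b) (c : ℝ) (hc : 0 ≤ c)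
    (f : ℝ → ℝ) (hf : ContinuousOn f (Set.Icc a b)) (Q : Polynomial ℝ)
    (h : ∀ x ∈ Set.Icc a b, |Q.eval x| ≤ c * |f x|) :
    _root_.Lp p a b (fun x => Q.eval x) ≤ c * _root_.Lp p a b f := by
  unfold _root_.Lp
  have hI : 0 ≤ ∫ x in a..b, |f x| ^ p :=
    intervalIntegral.integral_nonneg hab.le fun x _ => by positivity
  have e : c = (c ^ p) ^ (1 / p) := by
    rw [← Real.rpow_mul hc, mul_one_div_cancel hp.ne', Real.rpow_one]
  rw [e, ← Real.mul_rpow (by positivity) hI]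
  refine Real.rpow_le_rpow
    (intervalIntegral.integral_nonneg hab.le fun x _ => by positivity) ?_ (by positivity)
  rw [← intervalIntegral.integral_const_mul]
  refine intervalIntegral.integral_mono_on hab.le ((cont_abs_rpow p hp Q).intervalIntegrable _ _)
    ?_ fun x hx => ?_
  · refine ContinuousOn.intervalIntegrable ?_
    rw [Set.uIcc_of_le hab.le]
    exact continuousOn_const.mul (hf.abs.rpow_const fun _ _ => Or.inr hp.le)
  · rw [← Real.mul_rpow hc (abs_nonneg _)]
    exact Real.rpow_le_rpow (abs_nonneg _) (h x hx) hp.le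

lemma IsDn.cont0 (n : ℕ) (hn : 1 ≤ n) (a b : ℝ) (fd : ℕ → ℝ → ℝ) (h : IsDn n a b fd) :
    ContinuousOn (fd 0) (Set.Icc a b) := by
  obtain ⟨h1, h2, -⟩ := h
  rcases hn.eq_or_lt with rfl | hlt
  · exact h2
  · exact fun x hx => (h1 0 (by omega) x hx).continuousWithinAt

lemma elt_le (n : ℕ) (hn : 1 ≤ n) (p : ℝ) (hp : 0 < p) (fd : ℕ → ℝ → ℝ) (h : IsDn n 0 1 fd) :
    mIoo n 0 1 fd / _root_.Lp p 0 1 (fd 0) ≤ n ! / Dstar n p 0 1 := by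
  have hD := Dstar_pos n p hp 0 1 one_pos
  have hF : (0:ℝ) < (n ! : ℝ) := by exact_mod_cast Nat.factorial_pos _
  have hbdd : ∀ t ∈ Set.Ioo (0:ℝ) 1, mIoo n 0 1 fd ≤ |fd n t| := fun t ht =>
    csInf_le ⟨0, by rintro _ ⟨y, -, rfl⟩; exact abs_nonneg _⟩ ⟨t, ht, rfl⟩
  have hm0 : 0 ≤ mIoo n 0 1 fd :=
    Real.sInf_nonneg (by rintro _ ⟨y, -, rfl⟩; exact abs_nonneg _)
  rcases hm0.eq_or_lt with h0 | hm
  · rw [← h0, zero_div]; positivity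
  obtain ⟨Q, hQ, hQn, hle⟩ := exists_poly n 0 1 one_pos _
    (fun I hI hc => interp n hn 0 1 fd h _ hm hbdd I hI hc)
  have h1 := Lp_mono_scale p hp 0 1 one_pos _ (by positivity) (fd 0) (h.cont0 n hn 0 1 fd) Q hle
  have h2 := (Dstar_le n p 0 1 zero_le_one Q hQ hQn).trans h1
  have h3 : 0 < _root_.Lp p 0 1 (fd 0) :=
    pos_of_mul_pos_right (hD.trans_le h2) (by positivity)
  rw [div_le_div_iff₀ h3 hD]
  calc _ ≤ mIoo n 0 1 fd * (n ! / mIoo n 0 1 fd * _root_.Lp p 0 1 (fd 0)) := by gcongr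
    _ = _ := by field_simp

lemma Cnp_eq (n : ℕ) (hn : 1 ≤ n) (p : ℝ) (hp : 0 < p) :
    Cnp n p / (n ! : ℝ) = 1 / Dstar n p 0 1 := by
  have hD := Dstar_pos n p hp 0 1 one_pos
  have hF : (0:ℝ) < (n ! : ℝ) := by exact_mod_cast Nat.factorial_pos _
  have hub : ∀ c ∈ { c | ∃ fd : ℕ → ℝ → ℝ, IsDn n 0 1 fd ∧ (∃ x ∈ Set.Icc (0:ℝ) 1, fd 0 x ≠ 0) ∧
    c = mIoo n 0 1 fd / _root_.Lp p 0 1 (fd 0) }, c ≤ n ! / Dstar n p 0 1 := by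
    rintro c ⟨fd, h, -, rfl⟩
    exact elt_le n hn p hp fd h
  have hlow : ∀ Q : Polynomial ℝ, Q.Monic → Q.natDegree = n →
      n ! / _root_.Lp p 0 1 (fun x => Q.eval x) ≤ Cnp n p := by
    intro Q hQ hQn
    refine le_csSup ⟨_, hub⟩ ⟨fun k x => (derivative^[k] Q).eval x, ?_, ?_, ?_⟩
    · have hd : ∀ k x, HasDerivAt (fun x => (derivative^[k] Q).eval x)
          ((derivative^[k+1] Q).eval x) x := by
        intro k x
        rw [Function.iterate_succ_apply']
        exact Polynomial.hasDerivAt _ x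
      refine ⟨fun k _ x _ => (hd k x).hasDerivWithinAt,
        (Polynomial.continuous _).continuousOn, fun x _ => ?_⟩
      have := hd (n-1) x
      rw [Nat.sub_add_cancel hn] at this
      exact this
    · by_contra hcon
      push Not at hcon
      exact hQ.ne_zero (eq_zero_of_infinite_isRoot Q
        ((Set.Icc_infinite (one_pos : (0:ℝ) < 1)).mono hcon))
    · have : mIoo n 0 1 (fun k x => (derivative^[k] Q).eval x) = n ! := by
        unfold mIoo
        have e : ∀ t, (derivative^[n] Q).eval t = n ! := by
          intro t
          rw [iterD_const n Q hQn.le, ← hQn, hQ.coeff_natDegree, mul_one]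
        simp only [e, abs_of_pos hF]
        rw [Set.Nonempty.image_const (Set.nonempty_Ioo.mpr one_pos), csInf_singleton]
      rw [this]
      simp
  have hCpos : 0 < Cnp n p := by
    have hx := hlow (X ^ n) (monic_X_pow n) (natDegree_X_pow n)
    have := hD.trans_le (Dstar_le n p 0 1 zero_le_one (X ^ n) (monic_X_pow n) (natDegree_X_pow n))
    exact (div_pos hF this).trans_le hx
  have hle : Cnp n p ≤ n ! / Dstar n p 0 1 := Real.sSup_le hub (by positivity)
  have hge : n ! / Cnp n p ≤ Dstar n p 0 1 := by
    refine le_Dstar _ _ _ _ _ fun Q hQ hQn => ?_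
    have hpQ := hD.trans_le (Dstar_le n p 0 1 zero_le_one Q hQ hQn)
    rw [div_le_comm₀ hCpos hpQ]
    exact hlow Q hQ hQn
  have : Cnp n p = n ! / Dstar n p 0 1 :=
    le_antisymm hle (by rwa [div_le_comm₀ hD hCpos])
  rw [this]
  field_simp

/-- If `1/p = 1/q + 1/r` then `D**(m+n,p,[a,b]) ≤ D**(m,q,[a,b]) · D**(n,r,[a,b])`, and
consequently `C(m+n,p)/(m+n)! ≥ (C(m,q)/m!)·(C(n,r)/n!)`. -/
theorem stmt18 (p q r : ℝ) (hp : 0 < p) (hq : 0 < q) (hr : 0 < r)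
    (hpqr : 1 / p = 1 / q + 1 / r) (a b : ℝ) (hab : a < b)
    (m n : ℕ) (hm : 1 ≤ m) (hn : 1 ≤ n) :
    Dstar (m + n) p a b ≤ Dstar m q a b * Dstar n r a b ∧
    Cnp m q / (m ! : ℝ) * (Cnp n r / (n ! : ℝ)) ≤ Cnp (m + n) p / ((m + n)! : ℝ) := by
  refine ⟨Dstar_mul p q r hp hq hr hpqr a b hab m n, ?_⟩
  rw [Cnp_eq m hm q hq, Cnp_eq n hn r hr, Cnp_eq (m + n) (by omega) p hp, one_div_mul_one_div]
  exact one_div_le_one_div_of_le (Dstar_pos _ p hp 0 1 one_pos)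
    (Dstar_mul p q r hp hq hr hpqr 0 1 one_pos m n)
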